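/- Let S be a finite Boolean inverse monoid. Then: (1) S is fundamental if and only if its groupoid of atoms is principal; (2) S is 0-simplifying if and only if its groupoid of atoms is connected. -/

import Mathlib

namespace Paper

/-- An inverse semigroup with zero: an associative multiplication, a zero that is
absorbing, and a map `⁻¹` sending each element to its unique generalized inverse. -/
class IsInverseSemigroup (S : Type*) [Mul S] [Zero S] [Inv S] : Prop where
  mul_assoc : ∀ a b c : S, a * b * c = a * (b * c)
  mul_inv_mul : ∀ a : S, a * a⁻¹ * a = a
  inv_mul_inv : ∀ a : S, a⁻¹ * a * a⁻¹ = a⁻¹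
  inv_unique : ∀ a b : S, a * b * a = a → b * a * b = b → b = a⁻¹
  zero_mul : ∀ a : S, 0 * a = 0
  mul_zero : ∀ a : S, a * 0 = 0

variable {S : Type*} [Mul S] [Zero S] [Inv S]

/-- The natural partial order: `a ≤ b` iff `a = b * a⁻¹ * a`. -/
def nle (a b : S) : Prop := a = b * a⁻¹ * a

/-- `e` is an idempotent. -/
def idem (e : S) : Prop := e * e = e

/-- `a` and `b` are compatible. -/
def compat (a b : S) : Prop := idem (a⁻¹ * b) ∧ idem (a * b⁻¹)

/-- `a` and `b` are orthogonal. -/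
def orth (a b : S) : Prop := a⁻¹ * b = 0 ∧ a * b⁻¹ = 0

/-- `j` is the least upper bound of `a` and `b` for the natural partial order. -/
def isJoin (a b j : S) : Prop :=
  nle a j ∧ nle b j ∧ ∀ c : S, nle a c → nle b c → nle j c

/-- `m` is the greatest lower bound of `a` and `b` for the natural partial order. -/
def isMeet (a b m : S) : Prop :=
  nle m a ∧ nle m b ∧ ∀ c : S, nle c a → nle c b → nle c m

/-- `a` is an atom: a nonzero element with nothing strictly between it and `0`. -/
def isAtomElem (a : S) : Prop := a ≠ 0 ∧ ∀ x : S, nle x a → x = a ∨ x = 0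

/-- `s` is the least upper bound of the finite family `f`. -/
def isJoinFin {m : ℕ} (f : Fin m → S) (s : S) : Prop :=
  (∀ i, nle (f i) s) ∧ ∀ c : S, (∀ i, nle (f i) c) → nle s c

/-- A Boolean inverse semigroup: a nonzero inverse semigroup with zero in which
compatible pairs have joins, multiplication distributes over binary compatible joins,
and the idempotents form a generalized Boolean algebra under the natural partial
order (meets of idempotents are automatically given by multiplication; the extra
requirement is the existence of relative complements). -/
class IsBooleanInverseSemigroup (S : Type*) [Mul S] [Zero S] [Inv S]
    extends IsInverseSemigroup S : Prop where
  exists_ne_zero : ∃ a : S, a ≠ 0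
  compat_join : ∀ a b : S, compat a b → ∃ j, isJoin a b j
  mul_join : ∀ a b j c : S, isJoin a b j → isJoin (c * a) (c * b) (c * j)
  join_mul : ∀ a b j c : S, isJoin a b j → isJoin (a * c) (b * c) (j * c)
  relcomp : ∀ e f : S, idem e → idem f → nle f e →
    ∃ g : S, idem g ∧ nle g e ∧ g * f = 0 ∧ isJoin f g e


/-- An additive ideal: a nonempty two-sided semigroup ideal closed under binary
compatible joins. -/
def isAdditiveIdeal {S : Type*} [Mul S] [Inv S] (I : Set S) : Prop :=
  I.Nonempty ∧ (∀ a ∈ I, ∀ s : S, s * a ∈ I ∧ a * s ∈ I) ∧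
    (∀ a ∈ I, ∀ b ∈ I, compat a b → ∀ j : S, isJoin a b j → j ∈ I)

/-- `f ≼ e`: there is a pencil `x₁, …, xₘ` from `f` to `e`, i.e.
`f = ⋁ᵢ d(xᵢ)` and `r(xᵢ) ≤ e` for all `i`. -/
def pencilLe {S : Type*} [Mul S] [Inv S] (f e : S) : Prop :=
  ∃ (m : ℕ) (x : Fin (m + 1) → S),
    isJoinFin (fun i => (x i)⁻¹ * x i) f ∧ ∀ i, nle (x i * (x i)⁻¹) e

/-- `S` is `0`-simplifying: it is nonzero and its only additive ideals are `{0}`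
and `S`. -/
def isZeroSimplifying (S : Type*) [Mul S] [Zero S] [Inv S] : Prop :=
  (∃ a : S, a ≠ 0) ∧
    ∀ I : Set S, isAdditiveIdeal I → I = {(0 : S)} ∨ I = Set.univ

/-- `S` is fundamental: every element commuting with all idempotents is idempotent. -/
def isFundamental (S : Type*) [Mul S] : Prop :=
  ∀ a : S, (∀ e : S, idem e → a * e = e * a) → idem a

/-- A morphism (additive homomorphism) of Boolean inverse semigroups: a semigroup
homomorphism preserving `0` and binary compatible joins. -/
def isMorphism {S : Type*} {T : Type*} [Mul S] [Zero S] [Inv S]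
    [Mul T] [Zero T] [Inv T] (θ : S → T) : Prop :=
  (∀ a b : S, θ (a * b) = θ a * θ b) ∧ θ 0 = 0 ∧
    ∀ a b j : S, compat a b → isJoin a b j → isJoin (θ a) (θ b) (θ j)

/-!
Every idempotent is a finite join of atomic idempotents, because the natural order is well-founded
and an atom below an idempotent can be split off by a relative complement.

(1) An atom `a` with `d(a) = r(a)` commutes with every idempotent `e`, since `d(a) * e` is either
`d(a)` or `0`; so it is idempotent if `S` is fundamental. Conversely, if `a` commutes with all
idempotents and `e` is an atomic idempotent, then `a * e` is `0` or an atom from `e` to `e`.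
When the groupoid is principal, `a = a * d(a)` is thus a join of idempotents.

(2) The elements supported on one connected component of the groupoid form an additive ideal, so a
`0`-simplifying `S` has only one component. Conversely, a nonzero additive ideal contains an atomic
idempotent, hence its whole component; if that is everything, the ideal contains every idempotent
and therefore all of `S`.
-/

theorem isAdditiveIdeal.mul_mem_left {S : Type*} [Mul S] [Inv S] {I : Set S} {a : S}
    (hI : isAdditiveIdeal I) (s : S) (ha : a ∈ I) : s * a ∈ I :=
  (hI.2.1 a ha s).1

theorem isAdditiveIdeal.mul_mem_right {S : Type*} [Mul S] [Inv S] {I : Set S} {a : S}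
    (hI : isAdditiveIdeal I) (s : S) (ha : a ∈ I) : a * s ∈ I :=
  (hI.2.1 a ha s).2

section InverseSemigroup

variable [IsInverseSemigroup S] {a b e f g : S}

scoped instance : SemigroupWithZero S where
  mul_assoc := IsInverseSemigroup.mul_assoc
  zero_mul := IsInverseSemigroup.zero_mul
  mul_zero := IsInverseSemigroup.mul_zero

scoped instance : InvolutiveInv S where
  inv_inv a := (IsInverseSemigroup.inv_unique a⁻¹ a (IsInverseSemigroup.inv_mul_inv a)
    (IsInverseSemigroup.mul_inv_mul a)).symm

theorem mul_inv_mul_self (a : S) : a * (a⁻¹ * a) = a := by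
  rw [← mul_assoc, IsInverseSemigroup.mul_inv_mul]

theorem mul_inv_mul_mul (a x : S) : a * (a⁻¹ * (a * x)) = a * x := by
  simp only [← mul_assoc, IsInverseSemigroup.mul_inv_mul]

theorem inv_mul_mul_inv_mul (a x : S) : a⁻¹ * (a * (a⁻¹ * x)) = a⁻¹ * x := by
  simp only [← mul_assoc, IsInverseSemigroup.inv_mul_inv]

theorem eq_zero_of_inv_mul_self_eq_zero (h : a⁻¹ * a = 0) : a = 0 := by
  rw [← mul_inv_mul_self a, h, mul_zero]

theorem idem_zero : idem (0 : S) := zero_mul 0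

theorem idem_inv_mul (a : S) : idem (a⁻¹ * a) := by
  rw [idem, mul_assoc, mul_inv_mul_self]

theorem idem_mul_inv (a : S) : idem (a * a⁻¹) := by
  simpa only [inv_inv] using idem_inv_mul a⁻¹

theorem idem.mul_mul_self (he : idem e) (x : S) : e * (e * x) = e * x := by
  rw [← mul_assoc, he]

theorem idem.inv_eq (he : idem e) : e⁻¹ = e :=
  (IsInverseSemigroup.inv_unique e e (by rw [he, he]) (by rw [he, he])).symm

-- `f * (e * f)⁻¹ * e` is another inverse of `e * f`, and it is visibly idempotent.
theorem idem.mul (he : idem e) (hf : idem f) : idem (e * f) := by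
  set x := (e * f)⁻¹ with hx
  have hxef (y : S) : x * (e * (f * (x * y))) = x * y := by
    simpa only [mul_assoc] using inv_mul_mul_inv_mul (e * f) y
  have x_eq : f * (x * e) = x := by
    refine IsInverseSemigroup.inv_unique (e * f) _ ?_ ?_
    · simpa only [mul_assoc, he.mul_mul_self, hf.mul_mul_self] using mul_inv_mul_self (e * f)
    · simp only [mul_assoc, he.mul_mul_self, hf.mul_mul_self, hxef]
  have x_idem : idem x := by
    rw [idem, ← x_eq]
    simp only [mul_assoc, hxef]
  rwa [← inv_inv (e * f), ← hx, x_idem.inv_eq]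

theorem idem.mul_comm (he : idem e) (hf : idem f) : e * f = f * e := by
  have hfe : f * e = (e * f)⁻¹ := by
    refine IsInverseSemigroup.inv_unique (e * f) (f * e) ?_ ?_
    · simpa only [idem, mul_assoc, he.mul_mul_self, hf.mul_mul_self] using he.mul hf
    · simpa only [idem, mul_assoc, he.mul_mul_self, hf.mul_mul_self] using hf.mul he
  rw [hfe, (he.mul hf).inv_eq]

theorem inv_mul_rev (a b : S) : (a * b)⁻¹ = b⁻¹ * a⁻¹ := by
  have hcomm := (idem_mul_inv b).mul_comm (idem_inv_mul a)
  refine (IsInverseSemigroup.inv_unique (a * b) (b⁻¹ * a⁻¹) ?_ ?_).symm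
  · calc a * b * (b⁻¹ * a⁻¹) * (a * b) = a * (b * b⁻¹ * (a⁻¹ * a)) * b := by
          simp only [mul_assoc]
      _ = a * b := by
          rw [hcomm]
          simp only [mul_assoc, mul_inv_mul_mul, mul_inv_mul_self]
  · calc b⁻¹ * a⁻¹ * (a * b) * (b⁻¹ * a⁻¹) = b⁻¹ * (a⁻¹ * a * (b * b⁻¹)) * a⁻¹ := by
          simp only [mul_assoc]
      _ = b⁻¹ * (b * b⁻¹ * (a⁻¹ * a)) * a⁻¹ := by rw [hcomm]
      _ = b⁻¹ * (a⁻¹ * (a * a⁻¹)) := by simp only [mul_assoc, inv_mul_mul_inv_mul]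
      _ = b⁻¹ * a⁻¹ := by rw [← mul_assoc a⁻¹, IsInverseSemigroup.inv_mul_inv]

theorem inv_mul_self_mul_idem (a : S) (he : idem e) :
    (a * e)⁻¹ * (a * e) = a⁻¹ * a * e := by
  calc (a * e)⁻¹ * (a * e) = e * (a⁻¹ * a) * e := by
        simp only [inv_mul_rev, he.inv_eq, mul_assoc]
    _ = a⁻¹ * a * e := by rw [he.mul_comm (idem_inv_mul a), mul_assoc, he]

theorem idem.inv_mul_mul (he : idem e) (a : S) : idem (a⁻¹ * e * a) := by
  have h : a⁻¹ * e * a = (e * a)⁻¹ * (e * a) := by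
    simp only [inv_mul_rev, he.inv_eq, mul_assoc, he.mul_mul_self]
  exact h ▸ idem_inv_mul (e * a)

theorem idem.mul_eq_mul_conj (he : idem e) (a : S) : e * a = a * (a⁻¹ * e * a) := by
  calc e * a = e * (a * a⁻¹) * a := by rw [mul_assoc, mul_assoc, mul_inv_mul_self]
    _ = a * (a⁻¹ * e * a) := by
        rw [he.mul_comm (idem_mul_inv a)]
        simp only [mul_assoc]

theorem nle_iff_exists_idem : nle a b ↔ ∃ e, idem e ∧ a = b * e := by
  refine ⟨fun h => ⟨a⁻¹ * a, idem_inv_mul a, by rwa [nle, mul_assoc] at h⟩, ?_⟩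
  rintro ⟨e, he, rfl⟩
  rw [nle, mul_assoc, inv_mul_self_mul_idem b he, mul_assoc, mul_inv_mul_mul]

/-- The natural partial order `nle` as a Mathlib order, so that lemmas about orders apply to it. -/
scoped instance naturalOrder : PartialOrder S where
  le := nle
  le_refl a := nle_iff_exists_idem.2 ⟨a⁻¹ * a, idem_inv_mul a, (mul_inv_mul_self a).symm⟩
  le_trans a b c hab hbc := by
    obtain ⟨e, he, rfl⟩ := nle_iff_exists_idem.1 hab
    obtain ⟨f, hf, rfl⟩ := nle_iff_exists_idem.1 hbc
    exact nle_iff_exists_idem.2 ⟨f * e, hf.mul he, mul_assoc c f e⟩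
  le_antisymm a b hab hba := by
    obtain ⟨e, he, ha⟩ := nle_iff_exists_idem.1 hab
    obtain ⟨f, hf, hb⟩ := nle_iff_exists_idem.1 hba
    calc a = b * e := ha
      _ = a * e * f := by rw [hb, mul_assoc, hf.mul_comm he, mul_assoc]
      _ = a * f := by rw [ha, mul_assoc b, he]
      _ = b := hb.symm

theorem le_iff_exists_idem : a ≤ b ↔ ∃ e, idem e ∧ a = b * e := nle_iff_exists_idem

theorem eq_mul_inv_mul_of_le (h : a ≤ b) : a = b * (a⁻¹ * a) := by
  rw [← mul_assoc]
  exact h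

theorem mul_idem_le (he : idem e) (a : S) : a * e ≤ a := le_iff_exists_idem.2 ⟨e, he, rfl⟩

theorem idem_mul_le (he : idem e) (a : S) : e * a ≤ a :=
  he.mul_eq_mul_conj a ▸ mul_idem_le (he.inv_mul_mul a) a

scoped instance : OrderBot S where
  bot := 0
  bot_le a := mul_zero a ▸ mul_idem_le idem_zero a

theorem idem.of_le (hf : idem f) (h : e ≤ f) : idem e := by
  obtain ⟨g, hg, rfl⟩ := le_iff_exists_idem.1 h
  exact hf.mul hg

theorem idem.eq_mul_of_le (he : idem e) (h : e ≤ f) : e = f * e := by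
  simpa only [he.inv_eq, show e * e = e from he] using eq_mul_inv_mul_of_le h

theorem inv_le_inv_of_le (h : a ≤ b) : a⁻¹ ≤ b⁻¹ := by
  obtain ⟨e, he, rfl⟩ := le_iff_exists_idem.1 h
  rw [inv_mul_rev, he.inv_eq]
  exact idem_mul_le he b⁻¹

theorem inv_mul_self_le_of_le (h : a ≤ b) : a⁻¹ * a ≤ b⁻¹ * b := by
  obtain ⟨e, he, rfl⟩ := le_iff_exists_idem.1 h
  rw [inv_mul_self_mul_idem b he]
  exact mul_idem_le he _

theorem idem.le_inv_mul_self (he : idem e) (h : e ≤ a) : e ≤ a⁻¹ * a := by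
  simpa only [he.inv_eq, show e * e = e from he] using inv_mul_self_le_of_le h

theorem isAtomElem_iff_isAtom : isAtomElem a ↔ IsAtom a := by
  refine ⟨fun h => ⟨h.1, fun x hx => (h.2 x hx.le).resolve_left hx.ne⟩, fun h => ?_⟩
  exact ⟨h.1, fun x hx => (h.le_iff.1 hx).symm⟩

theorem isAtomElem_inv_mul_iff : isAtomElem (a⁻¹ * a) ↔ isAtomElem a := by
  refine ⟨fun h => ⟨?_, fun x hx => ?_⟩, fun h => ⟨?_, fun x hx => ?_⟩⟩
  · rintro rfl
    exact h.1 (mul_zero _)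
  · refine (h.2 _ (inv_mul_self_le_of_le hx)).imp (fun hd => ?_) eq_zero_of_inv_mul_self_eq_zero
    rw [eq_mul_inv_mul_of_le hx, hd, mul_inv_mul_self]
  · exact fun h0 => h.1 (eq_zero_of_inv_mul_self_eq_zero h0)
  · have hx_idem := (idem_inv_mul a).of_le hx
    have hx_eq : x = a⁻¹ * (a * x) := by rw [← mul_assoc, ← hx_idem.eq_mul_of_le hx]
    refine (h.2 _ (mul_idem_le hx_idem a)).imp (fun hax => ?_) (fun hax => ?_)
    · rw [hx_eq, hax]
    · rw [hx_eq, hax, mul_zero]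

theorem isAtomElem.inv (h : isAtomElem a) : isAtomElem a⁻¹ := by
  refine ⟨fun h0 => h.1 ?_, fun x hx => ?_⟩
  · rw [← inv_inv a, h0, idem_zero.inv_eq]
  · have hle : x⁻¹ ≤ a := inv_inv a ▸ inv_le_inv_of_le hx
    rw [← inv_inv x]
    exact (h.2 _ hle).imp (congrArg _) fun h0 => by rw [h0, idem_zero.inv_eq]

theorem isAtomElem.mul_inv (h : isAtomElem a) : isAtomElem (a * a⁻¹) := by
  simpa only [inv_inv] using isAtomElem_inv_mul_iff.2 h.inv

theorem isAtomElem.inv_mul_self_mul (hg : isAtomElem g) (hg_idem : idem g) (h : a * g ≠ 0) :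
    (a * g)⁻¹ * (a * g) = g := by
  refine (hg.2 _ ?_).resolve_right fun h0 => h (eq_zero_of_inv_mul_self_eq_zero h0)
  rw [inv_mul_self_mul_idem a hg_idem]
  exact idem_mul_le (idem_inv_mul a) g

theorem isAtomElem.mul_left (hg : isAtomElem g) (hg_idem : idem g) (h : a * g ≠ 0) :
    isAtomElem (a * g) :=
  isAtomElem_inv_mul_iff.1 (by rwa [hg.inv_mul_self_mul hg_idem h])

theorem isAtomElem.eq_of_mul_ne_zero (he : isAtomElem e) (hg : isAtomElem g)
    (he_idem : idem e) (hg_idem : idem g) (h : e * g ≠ 0) : e = g :=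
  ((he.2 _ (mul_idem_le hg_idem e)).resolve_right h).symm.trans
    ((hg.2 _ (idem_mul_le he_idem g)).resolve_right h)

theorem isAtomElem.mul_comm_idem (ha : isAtomElem a) (hloop : a⁻¹ * a = a * a⁻¹) (he : idem e) :
    a * e = e * a := by
  have left : a * e = a * (a⁻¹ * a * e) := by rw [← mul_assoc, mul_inv_mul_self]
  have right : e * a = a⁻¹ * a * e * a := by
    rw [(idem_inv_mul a).mul_comm he, hloop, mul_assoc, mul_assoc, mul_inv_mul_self]
  rcases (isAtomElem_inv_mul_iff.2 ha).2 _ (mul_idem_le he _) with h | h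
  · rw [left, right, h, mul_inv_mul_self, hloop, mul_assoc, mul_inv_mul_self]
  · rw [left, right, h, mul_zero, zero_mul]

-- Commuting with `e` makes `r(a * e)` a nonzero idempotent below the atom `e = d(a * e)`.
theorem isAtomElem.mul_inv_self_mul (he : isAtomElem e) (he_idem : idem e)
    (hcomm : a * e = e * a) (h : a * e ≠ 0) : a * e * (a * e)⁻¹ = e := by
  refine (he.2 _ ?_).resolve_right (he.mul_left he_idem h).mul_inv.1
  have hr : a * e * (a * e)⁻¹ = e * (a * e * (a * e)⁻¹) := by
    rw [← mul_assoc e, ← mul_assoc e, ← hcomm, mul_assoc a e e, he_idem]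
  rw [hr]
  exact mul_idem_le (idem_mul_inv _) e

theorem idem.compat (he : idem e) (hf : idem f) : compat e f := by
  rw [Paper.compat, he.inv_eq, hf.inv_eq]
  exact ⟨he.mul hf, he.mul hf⟩

theorem isJoin.idem (h : isJoin e f g) (he : idem e) (hf : idem f) : idem g :=
  (idem_inv_mul g).of_le (h.2.2 _ (he.le_inv_mul_self h.1) (hf.le_inv_mul_self h.2.1))

theorem isJoin.eq_zero (h : isJoin 0 0 a) : a = 0 :=
  le_bot_iff.1 (h.2.2 0 (le_refl (0 : S)) (le_refl (0 : S)))

/-- The atomic idempotents `e` and `f` are joined by an arrow `e ⟶ f` of the groupoid of atoms,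
that is, by an atom with domain `e` and range `f`. -/
def AtomConnected (e f : S) : Prop := ∃ x : S, isAtomElem x ∧ x⁻¹ * x = e ∧ x * x⁻¹ = f

theorem AtomConnected.refl (he : isAtomElem e) (he_idem : idem e) : AtomConnected e e :=
  ⟨e, he, by rw [he_idem.inv_eq, he_idem], by rw [he_idem.inv_eq, he_idem]⟩

theorem AtomConnected.symm : AtomConnected e f → AtomConnected f e := by
  rintro ⟨x, hx, rfl, rfl⟩
  exact ⟨x⁻¹, hx.inv, by rw [inv_inv], by rw [inv_inv]⟩

theorem AtomConnected.trans : AtomConnected e f → AtomConnected f g → AtomConnected e g := by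
  rintro ⟨x, hx, rfl, hxf⟩ ⟨y, -, hyf, rfl⟩
  have dom : (y * x)⁻¹ * (y * x) = x⁻¹ * x := by
    calc (y * x)⁻¹ * (y * x) = x⁻¹ * (y⁻¹ * y) * x := by simp only [inv_mul_rev, mul_assoc]
      _ = x⁻¹ * x := by rw [hyf, ← hxf, ← mul_assoc, IsInverseSemigroup.inv_mul_inv]
  have ran : y * x * (y * x)⁻¹ = y * y⁻¹ := by
    calc y * x * (y * x)⁻¹ = y * (x * x⁻¹) * y⁻¹ := by simp only [inv_mul_rev, mul_assoc]
      _ = y * y⁻¹ := by rw [hxf, ← hyf, mul_inv_mul_self]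
  exact ⟨y * x, isAtomElem_inv_mul_iff.1 (dom ▸ isAtomElem_inv_mul_iff.2 hx), dom, ran⟩

/-- Principality of the groupoid of atoms, whose identities are the atomic idempotents. -/
def AtomGroupoidPrincipal (S : Type*) [Mul S] [Zero S] [Inv S] : Prop :=
  ∀ a : S, isAtomElem a → a⁻¹ * a = a * a⁻¹ → idem a

/-- Connectedness of the groupoid of atoms, whose identities are the atomic idempotents. -/
def AtomGroupoidConnected (S : Type*) [Mul S] [Zero S] [Inv S] : Prop :=
  ∀ e f : S, isAtomElem e → isAtomElem f → idem e → idem f → AtomConnected e f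

theorem isFundamental.atomGroupoidPrincipal (h : isFundamental S) : AtomGroupoidPrincipal S :=
  fun a ha hloop => h a fun _ he => ha.mul_comm_idem hloop he

theorem AtomGroupoidPrincipal.idem_mul (h : AtomGroupoidPrincipal S) (he : isAtomElem e)
    (he_idem : idem e) (hcomm : a * e = e * a) : idem (a * e) := by
  by_cases h0 : a * e = 0
  · exact h0 ▸ idem_zero
  · refine h _ (he.mul_left he_idem h0) ?_
    rw [he.inv_mul_self_mul he_idem h0, he.mul_inv_self_mul he_idem hcomm h0]

namespace isAdditiveIdeal

variable {I : Set S}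

theorem zero_mem (hI : isAdditiveIdeal I) : 0 ∈ I := by
  obtain ⟨a, ha⟩ := hI.1
  exact zero_mul a ▸ hI.mul_mem_left 0 ha

theorem mem_of_le (hI : isAdditiveIdeal I) (hb : b ∈ I) (h : a ≤ b) : a ∈ I := by
  obtain ⟨e, -, rfl⟩ := le_iff_exists_idem.1 h
  exact hI.mul_mem_right e hb

theorem mem_of_atomConnected (hI : isAdditiveIdeal I) (he : e ∈ I)
    (h : AtomConnected e f) : f ∈ I := by
  obtain ⟨x, -, rfl, rfl⟩ := h
  have hx : x ∈ I := mul_inv_mul_self x ▸ hI.mul_mem_left x he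
  exact hI.mul_mem_right x⁻¹ hx

theorem exists_idem_atom_mem [WellFoundedLT S] (hI : isAdditiveIdeal I) (ha : a ∈ I)
    (ha0 : a ≠ 0) : ∃ e ∈ I, isAtomElem e ∧ idem e := by
  have hd : a⁻¹ * a ≠ ⊥ := fun h => ha0 (eq_zero_of_inv_mul_self_eq_zero h)
  obtain ⟨e, he, hle⟩ := (eq_bot_or_exists_atom_le (a⁻¹ * a)).resolve_left hd
  exact ⟨e, hI.mem_of_le (hI.mul_mem_left a⁻¹ ha) hle, isAtomElem_iff_isAtom.2 he,
    (idem_inv_mul a).of_le hle⟩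

end isAdditiveIdeal

/-- The additive ideal of the elements supported on the connected component of `e` in the
groupoid of atoms: those annihilated on the right by every atomic idempotent outside it. -/
def componentIdeal (e : S) : Set S :=
  {s | ∀ g : S, isAtomElem g → idem g → s * g ≠ 0 → AtomConnected e g}

theorem mul_mem_componentIdeal_left (ha : a ∈ componentIdeal e) (s : S) :
    s * a ∈ componentIdeal e :=
  fun g hg hg_idem h =>
    ha g hg hg_idem fun h0 => h (by rw [mul_assoc, h0, mul_zero])

-- If `a * s * g ≠ 0`, then `s * g` is an atom from `g` to an idempotent not annihilated by `a`.
theorem mul_mem_componentIdeal_right (ha : a ∈ componentIdeal e) (s : S) :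
    a * s ∈ componentIdeal e := by
  intro g hg hg_idem h
  have hsg_ne : s * g ≠ 0 := fun h0 => h (by rw [mul_assoc, h0, mul_zero])
  have hsg := hg.mul_left hg_idem hsg_ne
  have har_ne : a * (s * g * (s * g)⁻¹) ≠ 0 := fun h0 => h <| by
    calc a * s * g = a * (s * g * (s * g)⁻¹) * (s * g) := by
          rw [mul_assoc a s g, mul_assoc a (_ * _), IsInverseSemigroup.mul_inv_mul]
      _ = 0 := by rw [h0, zero_mul]
  have hgr : AtomConnected g (s * g * (s * g)⁻¹) :=
    ⟨s * g, hsg, hg.inv_mul_self_mul hg_idem hsg_ne, rfl⟩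
  exact (ha _ hsg.mul_inv (idem_mul_inv _) har_ne).trans hgr.symm

theorem isAtomElem.mem_componentIdeal (he : isAtomElem e) (he_idem : idem e) :
    e ∈ componentIdeal e := fun _ hg hg_idem h =>
  he.eq_of_mul_ne_zero hg he_idem hg_idem h ▸ AtomConnected.refl he he_idem

end InverseSemigroup

section BooleanInverseSemigroup

variable [IsBooleanInverseSemigroup S]

-- Splitting an atom off an idempotent leaves a strictly smaller relative complement.
theorem idem.induction_on_atoms [WellFoundedLT S] {P : S → Prop} (zero : P 0)
    (atom : ∀ e, idem e → isAtomElem e → P e)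
    (join : ∀ e g f, idem e → idem g → isJoin e g f → P e → P g → P f)
    {f : S} (hf : idem f) : P f := by
  induction f using WellFoundedLT.induction with
  | ind f ih =>
    rcases eq_bot_or_exists_atom_le f with rfl | ⟨e, he, hef⟩
    · exact zero
    have he_idem := hf.of_le hef
    obtain ⟨g, hg, hgf, hge, hjoin⟩ := IsBooleanInverseSemigroup.relcomp f e hf he_idem hef
    have hg_ne : g ≠ f := by
      rintro rfl
      exact he.1 ((he_idem.eq_mul_of_le hef).trans hge)
    exact join e g f he_idem hg hjoin (atom e he_idem (isAtomElem_iff_isAtom.2 he))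
      (ih g (lt_of_le_of_ne hgf hg_ne) hg)

theorem AtomGroupoidPrincipal.isFundamental [WellFoundedLT S] (h : AtomGroupoidPrincipal S) :
    isFundamental S := by
  intro a hcomm
  suffices idem (a * (a⁻¹ * a)) by rwa [mul_inv_mul_self] at this
  refine idem.induction_on_atoms (P := fun f => idem (a * f)) ?_ ?_ ?_ (idem_inv_mul a)
  · exact (mul_zero a).symm ▸ idem_zero
  · exact fun e he_idem he => h.idem_mul he he_idem (hcomm e he_idem)
  · exact fun e g f _ _ hjoin hae hag =>
      (IsBooleanInverseSemigroup.mul_join e g f a hjoin).idem hae hag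

theorem isJoin.mem_componentIdeal {e a b j : S} (h : isJoin a b j) (ha : a ∈ componentIdeal e)
    (hb : b ∈ componentIdeal e) : j ∈ componentIdeal e := by
  intro g hg hg_idem hjg
  by_cases hag : a * g = 0
  · refine hb g hg hg_idem fun hbg => hjg ?_
    have hjoin := IsBooleanInverseSemigroup.join_mul a b j g h
    rw [hag, hbg] at hjoin
    exact hjoin.eq_zero
  · exact ha g hg hg_idem hag

theorem isAdditiveIdeal_componentIdeal (e : S) : isAdditiveIdeal (componentIdeal e) :=
  ⟨⟨0, fun g _ _ h => absurd (zero_mul g) h⟩,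
    fun _ ha s => ⟨mul_mem_componentIdeal_left ha s, mul_mem_componentIdeal_right ha s⟩,
    fun _ ha _ hb _ _ hjoin => hjoin.mem_componentIdeal ha hb⟩

theorem isZeroSimplifying.atomGroupoidConnected (h : isZeroSimplifying S) :
    AtomGroupoidConnected S := by
  intro e f he hf he_idem hf_idem
  have he_mem := he.mem_componentIdeal he_idem
  have h_univ : componentIdeal e = Set.univ :=
    (h.2 _ (isAdditiveIdeal_componentIdeal e)).resolve_left fun h0 => he.1 (h0.subset he_mem)
  have hf_mem : f ∈ componentIdeal e := h_univ ▸ Set.mem_univ f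
  exact hf_mem f hf hf_idem (by rw [hf_idem]; exact hf.1)

theorem isAdditiveIdeal.eq_univ_of_idem_atoms_mem [WellFoundedLT S] {I : Set S}
    (hI : isAdditiveIdeal I) (h : ∀ e, idem e → isAtomElem e → e ∈ I) : I = Set.univ := by
  refine Set.eq_univ_of_forall fun s => ?_
  have hd : s⁻¹ * s ∈ I :=
    idem.induction_on_atoms (P := (· ∈ I)) hI.zero_mem h
      (fun e g f he hg hjoin heI hgI => hI.2.2 e heI g hgI (he.compat hg) f hjoin)
      (idem_inv_mul s)
  exact mul_inv_mul_self s ▸ hI.mul_mem_left s hd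

theorem AtomGroupoidConnected.isZeroSimplifying [WellFoundedLT S]
    (h : AtomGroupoidConnected S) : isZeroSimplifying S := by
  refine ⟨IsBooleanInverseSemigroup.exists_ne_zero, fun I hI => ?_⟩
  by_cases hzero : ∀ a ∈ I, a = 0
  · exact .inl (Set.eq_singleton_iff_unique_mem.2 ⟨hI.zero_mem, hzero⟩)
  · push Not at hzero
    obtain ⟨a, ha, ha0⟩ := hzero
    obtain ⟨e, heI, he, he_idem⟩ := hI.exists_idem_atom_mem ha ha0
    exact .inr <| hI.eq_univ_of_idem_atoms_mem fun f hf_idem hf =>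
      hI.mem_of_atomConnected heI (h e f he hf he_idem hf_idem)

end BooleanInverseSemigroup

theorem finite_fundamental_and_zeroSimplifying_general (S : Type*)
    [Mul S] [Zero S] [Inv S] [IsBooleanInverseSemigroup S] [WellFoundedLT S] :
    (isFundamental S ↔ AtomGroupoidPrincipal S) ∧
      (isZeroSimplifying S ↔ AtomGroupoidConnected S) :=
  ⟨⟨isFundamental.atomGroupoidPrincipal, AtomGroupoidPrincipal.isFundamental⟩,
    ⟨isZeroSimplifying.atomGroupoidConnected, AtomGroupoidConnected.isZeroSimplifying⟩⟩

/-- For a finite Boolean inverse monoid: (1) it is fundamental iff its groupoid of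
atoms is principal (every atom `a` with `d(a) = r(a)` is an identity of the
groupoid, i.e. an idempotent); (2) it is `0`-simplifying iff its groupoid of atoms
is connected (any two atomic idempotents are joined by an atom). -/
theorem finite_fundamental_and_zeroSimplifying (S : Type*)
    [Mul S] [Zero S] [Inv S] [One S] [IsBooleanInverseSemigroup S] [Finite S]
    (hone : ∀ a : S, 1 * a = a ∧ a * 1 = a) :
    (isFundamental S ↔
      ∀ a : S, isAtomElem a → a⁻¹ * a = a * a⁻¹ → idem a) ∧
    (isZeroSimplifying S ↔
      ∀ e f : S, isAtomElem e → isAtomElem f → idem e → idem f →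
        ∃ x : S, isAtomElem x ∧ x⁻¹ * x = e ∧ x * x⁻¹ = f) :=
  finite_fundamental_and_zeroSimplifying_general S

end Paper
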